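/- The Block type Lie algebra without central extension is indeed a Lie algebra: on the free module with basis {L_{m,l} : m ∈ ℤ, l ∈ ℤ, l ≥ 0}, the bilinear bracket defined on basis elements by [L_{m,l}, L_{n,k}] = (mk − nl)·L_{m+n−1, l+k−1} is antisymmetric and satisfies the Jacobi identity (note that when l,k ≥ 0 and the coefficient mk − nl is nonzero, the resulting index l+k−1 is again ≥ 0, so the bracket is well defined). -/

import Mathlib

open Finsupp

/-- The Block bracket on the free `ℚ`-module with basis `L_{m,l}`, `m ∈ ℤ`, `l ∈ ℕ`:
`[L_{m,l}, L_{n,k}] = (m k − n l) L_{m+n−1, l+k−1}`. (When `l = k = 0` the coefficient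
vanishes, so the truncated subtraction on `ℕ` is harmless.) -/
noncomputable def blockBracket (f g : (ℤ × ℕ) →₀ ℚ) : (ℤ × ℕ) →₀ ℚ :=
  f.sum fun p a => g.sum fun q b =>
    Finsupp.single (p.1 + q.1 - 1, p.2 + q.2 - 1)
      (a * b * ((p.1 * (q.2 : ℤ) - q.1 * (p.2 : ℤ) : ℤ) : ℚ))

theorem blockBracket_single (p q : ℤ × ℕ) (a b : ℚ) :
    blockBracket (single p a) (single q b) =
      single (p.1 + q.1 - 1, p.2 + q.2 - 1)
        (a * b * ((p.1 * (q.2 : ℤ) - q.1 * (p.2 : ℤ) : ℤ) : ℚ)) := by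
  simp [blockBracket]

theorem blockBracket_add_left (f f' g : (ℤ × ℕ) →₀ ℚ) :
    blockBracket (f + f') g = blockBracket f g + blockBracket f' g := by
  refine Finsupp.sum_add_index' (fun p => by simp) fun p a b => ?_
  rw [← Finsupp.sum_add]
  simp only [add_mul, single_add]

theorem blockBracket_antisymm (f g : (ℤ × ℕ) →₀ ℚ) :
    blockBracket f g = -blockBracket g f := by
  unfold blockBracket
  rw [Finsupp.sum_comm, ← Finsupp.sum_neg]
  refine Finsupp.sum_congr fun q _ => ?_
  rw [← Finsupp.sum_neg]
  refine Finsupp.sum_congr fun p _ => ?_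
  rw [← single_neg, add_comm p.1, add_comm p.2]
  congr 1
  push_cast
  ring

theorem blockBracket_add_right (f g g' : (ℤ × ℕ) →₀ ℚ) :
    blockBracket f (g + g') = blockBracket f g + blockBracket f g' := by
  rw [blockBracket_antisymm, blockBracket_add_left, blockBracket_antisymm f g,
    blockBracket_antisymm f g', neg_add]

theorem blockBracket_smul_left (a : ℚ) (f g : (ℤ × ℕ) →₀ ℚ) :
    blockBracket (a • f) g = a • blockBracket f g := by
  unfold blockBracket
  rw [Finsupp.sum_smul_index (fun p => by simp), Finsupp.smul_sum]
  simp only [Finsupp.smul_sum, smul_single, smul_eq_mul, mul_assoc]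

theorem blockBracket_smul_right (a : ℚ) (f g : (ℤ × ℕ) →₀ ℚ) :
    blockBracket f (a • g) = a • blockBracket f g := by
  rw [blockBracket_antisymm, blockBracket_smul_left, blockBracket_antisymm f g, smul_neg]

theorem blockBracket_zero_left (g : (ℤ × ℕ) →₀ ℚ) : blockBracket 0 g = 0 := by
  simp [blockBracket]

theorem blockBracket_zero_right (f : (ℤ × ℕ) →₀ ℚ) : blockBracket f 0 = 0 := by
  simp [blockBracket]

theorem blockBracket_single_blockBracket_single (p q r : ℤ × ℕ) (a b c : ℚ) :
    blockBracket (single p a) (blockBracket (single q b) (single r c)) =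
      single (p.1 + q.1 + r.1 - 2, p.2 + q.2 + r.2 - 2)
        (a * b * c * ((p.1 * (q.2 + r.2 - 1) - (q.1 + r.1 - 1) * p.2) *
          (q.1 * r.2 - r.1 * q.2))) := by
  obtain ⟨m, l⟩ := p
  obtain ⟨n, k⟩ := q
  obtain ⟨s, j⟩ := r
  simp only [blockBracket_single]
  rcases Nat.eq_zero_or_pos (k + j) with h | h
  · obtain ⟨rfl, rfl⟩ : k = 0 ∧ j = 0 := by omega
    simp
  · have hfst : m + (n + s - 1) - 1 = m + n + s - 2 := by ring
    have hsnd : l + (k + j - 1) - 1 = l + k + j - 2 := by omega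
    rw [hfst, hsnd]
    congr 1
    push_cast [Nat.cast_sub (show 1 ≤ k + j from h)]
    ring

theorem blockBracket_jacobi_single (p q r : ℤ × ℕ) (a b c : ℚ) :
    blockBracket (single p a) (blockBracket (single q b) (single r c)) +
      blockBracket (single q b) (blockBracket (single r c) (single p a)) +
        blockBracket (single r c) (blockBracket (single p a) (single q b)) = 0 := by
  simp only [blockBracket_single_blockBracket_single]
  rw [show q.1 + r.1 + p.1 = p.1 + q.1 + r.1 by ring,
    show q.2 + r.2 + p.2 = p.2 + q.2 + r.2 by ring,
    show r.1 + p.1 + q.1 = p.1 + q.1 + r.1 by ring,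
    show r.2 + p.2 + q.2 = p.2 + q.2 + r.2 by ring, ← single_add, ← single_add,
    single_eq_zero]
  ring

theorem blockBracket_jacobi (f g h : (ℤ × ℕ) →₀ ℚ) :
    blockBracket f (blockBracket g h) + blockBracket g (blockBracket h f) +
      blockBracket h (blockBracket f g) = 0 := by
  induction f using Finsupp.induction_linear with
  | zero => simp [blockBracket_zero_left, blockBracket_zero_right]
  | add f f' hf hf' =>
    simp only [blockBracket_add_left, blockBracket_add_right]
    linear_combination (norm := module) hf + hf'
  | single p a =>
    induction g using Finsupp.induction_linear with
    | zero => simp [blockBracket_zero_left, blockBracket_zero_right]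
    | add g g' hg hg' =>
      simp only [blockBracket_add_left, blockBracket_add_right]
      linear_combination (norm := module) hg + hg'
    | single q b =>
      induction h using Finsupp.induction_linear with
      | zero => simp [blockBracket_zero_left, blockBracket_zero_right]
      | add h h' hh hh' =>
        simp only [blockBracket_add_left, blockBracket_add_right]
        linear_combination (norm := module) hh + hh'
      | single r c => exact blockBracket_jacobi_single p q r a b c

/-- The Block type Lie algebra (without central extension) is a Lie algebra: the bracket
is bilinear, takes the prescribed values on basis elements, is antisymmetric and satisfies
the Jacobi identity. -/
theorem blockBracket_isLieAlgebra :
    (∀ (m n : ℤ) (l k : ℕ),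
      blockBracket (Finsupp.single (m, l) 1) (Finsupp.single (n, k) 1) =
        ((m * (k : ℤ) - n * (l : ℤ) : ℤ) : ℚ) • Finsupp.single (m + n - 1, l + k - 1) 1) ∧
    (∀ (a : ℚ) (f f' g : (ℤ × ℕ) →₀ ℚ),
      blockBracket (a • f + f') g = a • blockBracket f g + blockBracket f' g) ∧
    (∀ (a : ℚ) (f g g' : (ℤ × ℕ) →₀ ℚ),
      blockBracket f (a • g + g') = a • blockBracket f g + blockBracket f g') ∧
    (∀ f g : (ℤ × ℕ) →₀ ℚ, blockBracket f g = - blockBracket g f) ∧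
    (∀ f g h : (ℤ × ℕ) →₀ ℚ,
      blockBracket f (blockBracket g h) + blockBracket g (blockBracket h f) +
        blockBracket h (blockBracket f g) = 0) := by
  refine ⟨fun m n l k => ?_, fun a f f' g => ?_, fun a f g g' => ?_, blockBracket_antisymm,
    blockBracket_jacobi⟩
  · simp [blockBracket_single]
  · rw [blockBracket_add_left, blockBracket_smul_left]
  · rw [blockBracket_add_right, blockBracket_smul_right]
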